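/- Let Q be a poset of dimension at most 1 and of finite type. Then every closed full subposet inclusion D ⊆ Q admits a transfer, i.e., the monotone extension (D_*) → (Q_*) to posets with a bottom element adjoined has a right adjoint. -/

import Mathlib

universe u

/-- A poset has dimension at most 1 if whenever `w ≤ u ≤ x` and `w ≤ v ≤ x`, the elements
`u` and `v` are comparable. -/
def PosetDimLE1 (Q : Type u) [Preorder Q] : Prop :=
  ∀ ⦃w u v x : Q⦄, w ≤ u → u ≤ x → w ≤ v → v ≤ x → u ≤ v ∨ v ≤ u

/-- `suplim U` is the set of minimal elements of the set of upper bounds of `U`. -/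
def suplim {Q : Type u} [Preorder Q] (U : Set Q) : Set Q :=
  {s | Minimal (· ∈ upperBounds U) s}

/-- A subset `D` of a poset is closed if `suplim U ⊆ D` for every nonempty subset `U ⊆ D`. -/
def IsClosedSubposet {Q : Type u} [Preorder Q] (D : Set Q) : Prop :=
  ∀ U : Set Q, U ⊆ D → U.Nonempty → suplim U ⊆ D

/-- A monotone map `α : D → Q` admits a transfer if the extension
`α⁎ : D ∪ {-∞} → Q ∪ {-∞}` (sending `-∞` to `-∞`) has a right adjoint. -/
def AdmitsTransfer {D : Type u} {Q : Type u} [Preorder D] [Preorder Q] (α : D → Q) : Prop :=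
  ∃ r : WithBot Q → WithBot D, GaloisConnection (WithBot.map α) r

/-- **Statement 17.** Let `Q` be a poset of dimension at most 1 and of finite type
(all down-sets `{q | q ≤ x}` are finite). Then every closed full subposet inclusion
`D ⊆ Q` admits a transfer. -/
theorem admitsTransfer_of_closed_of_finiteType {Q : Type u} [PartialOrder Q]
    (hdim : PosetDimLE1 Q) (hft : ∀ x : Q, {q : Q | q ≤ x}.Finite)
    (D : Set Q) (hD : IsClosedSubposet D) :
    AdmitsTransfer ((Subtype.val) : D → Q) := by
  have key : ∀ q : WithBot Q, ∃ r : WithBot D, ∀ d : WithBot D,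
      WithBot.map (Subtype.val : D → Q) d ≤ q ↔ d ≤ r := by
    intro q
    induction q using WithBot.recBotCoe with
    | bot =>
      refine ⟨⊥, fun d => ?_⟩
      induction d using WithBot.recBotCoe <;> simp
    | coe q =>
      by_cases hne : (D ∩ Set.Iic q).Nonempty
      · -- a minimal upper bound of `D ∩ Iic q` lying below `q`
        have hfin : (upperBounds (D ∩ Set.Iic q) ∩ {x | x ≤ q}).Finite :=
          (hft q).subset Set.inter_subset_right
        obtain ⟨s, hs⟩ := hfin.exists_minimal ⟨q, fun x hx => hx.2, le_refl q⟩
        have hsD : s ∈ D := by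
          refine hD _ Set.inter_subset_left hne ⟨hs.prop.1, fun y hy hys => ?_⟩
          exact hs.le_of_le ⟨hy, le_trans hys hs.prop.2⟩ hys
        refine ⟨((⟨s, hsD⟩ : D) : WithBot D), fun d => ?_⟩
        induction d using WithBot.recBotCoe with
        | bot => simp
        | coe d =>
          rw [WithBot.map_coe, WithBot.coe_le_coe, WithBot.coe_le_coe]
          exact ⟨fun h => hs.prop.1 ⟨d.2, h⟩, fun h => le_trans h hs.prop.2⟩
      · refine ⟨⊥, fun d => ?_⟩
        induction d using WithBot.recBotCoe with
        | bot => simp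
        | coe d =>
          rw [WithBot.map_coe, WithBot.coe_le_coe]
          exact ⟨fun h => (hne ⟨d, d.2, h⟩).elim, fun h => by simp at h⟩
  choose r hr using key
  exact ⟨r, fun d q => hr q d⟩
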